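/- Let A be a nilpotent finite-dimensional left Leibniz algebra over a field F and let B be a nonzero ideal of A. Then B ∩ Z(A) ≠ {0}, where Z(A) is the center of A. -/

import Mathlib

open Submodule

section LeibnizDefs

variable {F : Type*} {A : Type*} [Field F] [AddCommGroup A] [Module F A]

/-- The span of all products `b*c` with `b ∈ B`, `c ∈ C`. -/
def mulSub (mul : A →ₗ[F] A →ₗ[F] A) (B C : Submodule F A) : Submodule F A :=
  Submodule.span F {z : A | ∃ b ∈ B, ∃ c ∈ C, mul b c = z}

/-- `fSub mul B C = B·C + C·B`, the function `f(B,C)`. -/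
def fSub (mul : A →ₗ[F] A →ₗ[F] A) (B C : Submodule F A) : Submodule F A :=
  mulSub mul B C ⊔ mulSub mul C B

/-- `fIter mul B C n = f^{n+1}(B,C)` (so index `0` is `f^1(B,C) = f(B,C)`). -/
def fIter (mul : A →ₗ[F] A →ₗ[F] A) (B C : Submodule F A) : ℕ → Submodule F A
  | 0 => fSub mul B C
  | n + 1 => fSub mul B (fIter mul B C n)

/-- `lcs mul B n = B^{n+1}`, the lower central series (index `0` is `B^1 = B`). -/
def lcs (mul : A →ₗ[F] A →ₗ[F] A) (B : Submodule F A) : ℕ → Submodule F A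
  | 0 => B
  | n + 1 => mulSub mul B (lcs mul B n)

/-- `ds mul B n = B^{(n+1)}`, the derived series (index `0` is `B^{(1)} = B`). -/
def ds (mul : A →ₗ[F] A →ₗ[F] A) (B : Submodule F A) : ℕ → Submodule F A
  | 0 => B
  | n + 1 => mulSub mul (ds mul B n) (ds mul B n)

/-- `B^ω = ⋂_{i ≥ 1} B^i`. -/
def omegaSub (mul : A →ₗ[F] A →ₗ[F] A) (B : Submodule F A) : Submodule F A :=
  ⨅ n, lcs mul B n

/-- `B` is a subalgebra: a subspace closed under multiplication. -/
def IsSubalg (mul : A →ₗ[F] A →ₗ[F] A) (B : Submodule F A) : Prop :=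
  ∀ x ∈ B, ∀ y ∈ B, mul x y ∈ B

/-- `I` is an ideal of the subalgebra `S`: `I ⊆ S` and `xI + Ix ⊆ I` for all `x ∈ S`. -/
def IsIdealIn (mul : A →ₗ[F] A →ₗ[F] A) (I S : Submodule F A) : Prop :=
  I ≤ S ∧ ∀ x ∈ S, ∀ y ∈ I, mul x y ∈ I ∧ mul y x ∈ I

/-- `B` is subinvariant in `S`: there is a chain of subalgebras
`B = c 0 ⊆ c 1 ⊆ ⋯ ⊆ c t = S` with each term an ideal of the next. -/
def IsSubinvariantIn (mul : A →ₗ[F] A →ₗ[F] A) (B S : Submodule F A) : Prop :=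
  ∃ (t : ℕ) (c : ℕ → Submodule F A), c 0 = B ∧ c t = S ∧
    (∀ i ≤ t, IsSubalg mul (c i)) ∧ ∀ i < t, IsIdealIn mul (c i) (c (i + 1))

/-- `B` is nilpotent: `B^m = 0` for some `m`. -/
def IsNilpotentSub (mul : A →ₗ[F] A →ₗ[F] A) (B : Submodule F A) : Prop :=
  ∃ m, lcs mul B m = ⊥

/-- `B` is solvable: `B^{(m)} = 0` for some `m`. -/
def IsSolvableSub (mul : A →ₗ[F] A →ₗ[F] A) (B : Submodule F A) : Prop :=
  ∃ m, ds mul B m = ⊥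

/-- The centralizer `Z_A(B) = {x : xb = 0 = bx for all b ∈ B}`. -/
def centralizerSet (mul : A →ₗ[F] A →ₗ[F] A) (B : Submodule F A) : Set A :=
  {x : A | ∀ b ∈ B, mul x b = 0 ∧ mul b x = 0}

/-- `R` is the radical (the maximal solvable ideal) of the subalgebra `S`. -/
def IsRadicalIn (mul : A →ₗ[F] A →ₗ[F] A) (S R : Submodule F A) : Prop :=
  IsIdealIn mul R S ∧ IsSolvableSub mul R ∧
    ∀ T, IsIdealIn mul T S → IsSolvableSub mul T → T ≤ R

/-- `N` is the nilradical (the maximal nilpotent ideal) of the subalgebra `S`. -/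
def IsNilradicalIn (mul : A →ₗ[F] A →ₗ[F] A) (S N : Submodule F A) : Prop :=
  IsIdealIn mul N S ∧ IsNilpotentSub mul N ∧
    ∀ T, IsIdealIn mul T S → IsNilpotentSub mul T → T ≤ N

/-- `H` is a Cartan subalgebra: a nilpotent self-normalizing subalgebra. -/
def IsCartan (mul : A →ₗ[F] A →ₗ[F] A) (H : Submodule F A) : Prop :=
  IsSubalg mul H ∧ IsNilpotentSub mul H ∧
    ∀ x : A, (∀ h ∈ H, mul x h ∈ H ∧ mul h x ∈ H) → x ∈ H

/-- The subalgebra generated by a set: the smallest subalgebra containing it. -/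
def subalgGen (mul : A →ₗ[F] A →ₗ[F] A) (s : Set A) : Submodule F A :=
  sInf {S : Submodule F A | IsSubalg mul S ∧ s ⊆ (S : Set A)}

end LeibnizDefs

/-! The Leibniz identity gives `A^i A^j ⊆ A^{i+j}`, so `A^n A`, and not only `A A^n`, lies in
`A^{n+1}`. For the last `n` with `B ∩ A^n ≠ 0`, products on either side of elements of `A` with
elements of `B ∩ A^n` therefore lie in `B ∩ A^{n+1} = 0`, so `B ∩ A^n` is central. -/

section Leibniz

variable {F A : Type*} [Field F] [AddCommGroup A] [Module F A] {mul : A →ₗ[F] A →ₗ[F] A}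

theorem mulSub_eq_map₂ (B C : Submodule F A) : mulSub mul B C = map₂ mul B C :=
  (map₂_eq_span_image2 mul B C).symm

theorem mul_mem_mulSub {B C : Submodule F A} {b c : A} (hb : b ∈ B) (hc : c ∈ C) :
    mul b c ∈ mulSub mul B C :=
  subset_span ⟨b, hb, c, hc, rfl⟩

theorem mulSub_le {B C D : Submodule F A} :
    mulSub mul B C ≤ D ↔ ∀ b ∈ B, ∀ c ∈ C, mul b c ∈ D := by
  rw [mulSub_eq_map₂, map₂_le]

theorem mulSub_mono_right (B : Submodule F A) {C D : Submodule F A} (h : C ≤ D) :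
    mulSub mul B C ≤ mulSub mul B D := by
  simpa only [mulSub_eq_map₂] using map₂_le_map₂_right h

theorem mulSub_mulSub_le
    (hleib : ∀ x y z : A, mul x (mul y z) = mul (mul x y) z + mul y (mul x z))
    (B C D : Submodule F A) :
    mulSub mul (mulSub mul B C) D ≤
      mulSub mul B (mulSub mul C D) ⊔ mulSub mul C (mulSub mul B D) := by
  refine mulSub_le.2 fun w hw d hd ↦ ?_
  suffices mulSub mul B C ≤
      (mulSub mul B (mulSub mul C D) ⊔ mulSub mul C (mulSub mul B D)).comap (mul.flip d) from
    this hw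
  refine mulSub_le.2 fun b hb c hc ↦ ?_
  rw [mem_comap, LinearMap.flip_apply, eq_sub_of_add_eq (hleib b c d).symm]
  exact sub_mem (mem_sup_left (mul_mem_mulSub hb (mul_mem_mulSub hc hd)))
    (mem_sup_right (mul_mem_mulSub hc (mul_mem_mulSub hb hd)))

theorem mulSub_lcs_lcs_le
    (hleib : ∀ x y z : A, mul x (mul y z) = mul (mul x y) z + mul y (mul x z))
    (S : Submodule F A) (i j : ℕ) :
    mulSub mul (lcs mul S i) (lcs mul S j) ≤ lcs mul S (i + j + 1) := by
  induction i generalizing j with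
  | zero => rw [Nat.zero_add]; rfl
  | succ i ih =>
    calc mulSub mul (mulSub mul S (lcs mul S i)) (lcs mul S j)
      _ ≤ mulSub mul S (mulSub mul (lcs mul S i) (lcs mul S j)) ⊔
          mulSub mul (lcs mul S i) (lcs mul S (j + 1)) := mulSub_mulSub_le hleib _ _ _
      _ ≤ lcs mul S (i + j + 1 + 1) ⊔ lcs mul S (i + (j + 1) + 1) :=
        sup_le_sup (mulSub_mono_right S (ih j)) (ih (j + 1))
      _ = lcs mul S (i + 1 + j + 1) := by
        rw [← Nat.add_assoc i j 1, sup_idem, Nat.add_right_comm i 1 j]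

theorem fSub_lcs_le
    (hleib : ∀ x y z : A, mul x (mul y z) = mul (mul x y) z + mul y (mul x z))
    (S : Submodule F A) (n : ℕ) : fSub mul S (lcs mul S n) ≤ lcs mul S (n + 1) :=
  sup_le le_rfl (mulSub_lcs_lcs_le hleib S n 0)

theorem mem_centralizerSet_of_disjoint_lcs_succ
    (hleib : ∀ x y z : A, mul x (mul y z) = mul (mul x y) z + mul y (mul x z))
    {B S : Submodule F A} (hB : IsIdealIn mul B S) {n : ℕ}
    (hdisj : Disjoint B (lcs mul S (n + 1))) {x : A} (hxB : x ∈ B) (hxn : x ∈ lcs mul S n) :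
    x ∈ centralizerSet mul S := by
  intro a ha
  obtain ⟨hax, hxa⟩ := hB.2 a ha x hxB
  exact ⟨disjoint_def.1 hdisj _ hxa
      (fSub_lcs_le hleib S n (mem_sup_right (mul_mem_mulSub hxn ha))),
    disjoint_def.1 hdisj _ hax (fSub_lcs_le hleib S n (mem_sup_left (mul_mem_mulSub ha hxn)))⟩

theorem exists_not_disjoint_lcs_and_disjoint_lcs_succ {B S : Submodule F A}
    (hnil : IsNilpotentSub mul S) (hBS : B ≤ S) (hBne : B ≠ ⊥) :
    ∃ n, ¬Disjoint B (lcs mul S n) ∧ Disjoint B (lcs mul S (n + 1)) := by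
  by_contra! hsucc
  obtain ⟨m, hm⟩ := hnil
  have not_disjoint (n : ℕ) : ¬Disjoint B (lcs mul S n) := by
    induction n with
    | zero => exact fun h ↦ hBne (h.eq_bot_of_le hBS)
    | succ n ih => exact hsucc n ih
  exact not_disjoint m (hm ▸ disjoint_bot_right)

theorem stmt_5_general
    (hleib : ∀ x y z : A, mul x (mul y z) = mul (mul x y) z + mul y (mul x z))
    {B S : Submodule F A} (hnil : IsNilpotentSub mul S) (hB : IsIdealIn mul B S) (hBne : B ≠ ⊥) :
    ∃ x ∈ B, x ≠ 0 ∧ x ∈ centralizerSet mul S := by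
  obtain ⟨n, hmeet, hdisj⟩ := exists_not_disjoint_lcs_and_disjoint_lcs_succ hnil hB.1 hBne
  obtain ⟨x, ⟨hxB, hxn⟩, hx0⟩ := exists_mem_ne_zero_of_ne_bot (mt disjoint_iff.2 hmeet)
  exact ⟨x, hxB, hx0, mem_centralizerSet_of_disjoint_lcs_succ hleib hB hdisj hxB hxn⟩

end Leibniz

/-- a nonzero ideal of a nilpotent Leibniz algebra meets the center
nontrivially. -/
theorem stmt_5 {F A : Type*} [Field F] [AddCommGroup A] [Module F A] [FiniteDimensional F A]
    (mul : A →ₗ[F] A →ₗ[F] A)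
    (hleib : ∀ x y z : A, mul x (mul y z) = mul (mul x y) z + mul y (mul x z))
    (hnil : IsNilpotentSub mul (⊤ : Submodule F A))
    (B : Submodule F A) (hB : IsIdealIn mul B ⊤) (hBne : B ≠ ⊥) :
    ∃ x ∈ B, x ≠ 0 ∧ ∀ a : A, mul x a = 0 ∧ mul a x = 0 := by
  obtain ⟨x, hxB, hx0, hx⟩ := stmt_5_general hleib hnil hB hBne
  exact ⟨x, hxB, hx0, fun a ↦ hx a mem_top⟩
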